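/- arXiv:1801.02979 — 2 statements merged into one kernel-verified Lean document; each statement's English description precedes it below -/
import Mathlib

section
/- Let 1 ≤ k ≤ L be integers, 0 < λ < 1, and let u be a solution of the mean-field ODE system taking values in Ū with initial condition g ∈ U. Then for each j ≥ 0, lim_{t→∞} (u_j(t) − ū_j) = 0. In particular, ū is the unique element w of U satisfying λ[f(w_{j−1}) − f(w_j)] = k[w_j − w_{j+1}] for all j ≥ 1 with w_0 = 1. -/
open Finset Set Filter

/-- The polynomial `f ≡ f^{(L,k)}` from the paper. -/
noncomputable def fLk (L k : ℕ) (x : ℝ) : ℝ :=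
  ∑ i ∈ Finset.Icc 1 k,
    (L.choose (L - k + i) : ℝ) * ((L - k + i - 2).choose (i - 1) : ℝ) *
      (-1 : ℝ) ^ (i - 1) * x ^ (L - k + i)

/-- Membership in `Ū`: real sequences with `1 = u_0 ≥ u_1 ≥ … ≥ 0`. -/
def InUbar (u : ℕ → ℝ) : Prop :=
  u 0 = 1 ∧ (∀ j, u (j + 1) ≤ u j) ∧ (∀ j, 0 ≤ u j)

/-- A `Ū`-valued solution of the mean-field ODE system with initial condition `g`. -/
def IsMFSol (L k : ℕ) (lam : ℝ) (g : ℕ → ℝ) (u : ℝ → ℕ → ℝ) : Prop :=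
  (∀ j, u 0 j = g j) ∧
  (∀ t ∈ Set.Ici (0 : ℝ), InUbar (u t)) ∧
  (∀ j, 1 ≤ j → ∀ t ∈ Set.Ici (0 : ℝ),
    HasDerivWithinAt (fun τ => u τ j)
      (lam * (fLk L k (u t (j - 1)) - fLk L k (u t j)) - k * (u t j - u t (j + 1)))
      (Set.Ici (0 : ℝ)) t)

/-!
The errors `e_j = u_j - ū_j` satisfy `e_j' = a_{j-1} - a_j - κ (e_j - e_{j+1})` with
`a_j = λ (f(u_j) - f(ū_j))`, since both flows balance at `ū`. As `f` is increasing, `a_j` has the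
sign of `e_j`, so `|e_j|` satisfies the same relation with `≤` and with absolute values
everywhere. Summed over `j > n` and integrated over `[0, T]`, the right-hand sides telescope, and
the boundary term at `j = ∞` vanishes by dominated convergence, since `u_j(t) → 0` as `j → ∞`
for each fixed `t`. Hence `κ ∫ |e_{n+1}|` is at most `∑_{j>n} |e_j(0)| + ∫ |a_n|`, where
`|a_n| ≤ M |e_n|` by Lipschitz continuity. By induction on `n`, starting from `e_0 = 0`, all `e_n`
are integrable on `[0, ∞)`; so are their derivatives, and therefore `e_n(t) → 0`.

The properties of `f` that this uses come from `f'' = c x^(L-k-1) (1-x)^(k-1)` with `c ≥ 0` (for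
`k < L`): with `f'(0) ≥ 0` it makes `f` increasing on `[0, 1]`, and by convexity
`f(x) ≤ f(1) x = k x`, where `f(1) = k` is Vandermonde's identity with a negative upper index.
-/

open Polynomial Topology MeasureTheory

/-! ### Convexity and monotonicity of `f` -/

theorem monotoneOn_eval_of_derivative_nonneg {P : ℝ[X]} {D : Set ℝ} (hD : Convex ℝ D)
    (hP : ∀ x ∈ D, 0 ≤ P.derivative.eval x) : MonotoneOn (fun x => P.eval x) D :=
  monotoneOn_of_deriv_nonneg hD P.continuousOn P.differentiableOn fun x hx => by
    simpa only [P.deriv] using hP x (interior_subset hx)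

theorem convexOn_eval_of_derivative_derivative_nonneg {P : ℝ[X]} {D : Set ℝ} (hD : Convex ℝ D)
    (hP : ∀ x ∈ D, 0 ≤ P.derivative.derivative.eval x) : ConvexOn ℝ D fun x => P.eval x := by
  refine MonotoneOn.convexOn_of_deriv hD P.continuousOn P.differentiableOn ?_
  have hderiv : deriv (fun x => P.eval x) = fun x => P.derivative.eval x := funext fun _ => P.deriv
  rw [hderiv]
  exact (monotoneOn_eval_of_derivative_nonneg hD hP).mono interior_subset

theorem sum_neg_one_pow_mul_choose_mul_choose (p n q : ℕ) :
    ∑ j ∈ Finset.range (q + 1), (-1 : ℤ) ^ j * (p + j).choose j * (p + 1 + n).choose (q - j) =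
      n.choose q := by
  have vandermonde := Ring.add_choose_eq (R := ℤ) (r := -((p + 1 : ℕ) : ℤ))
    (s := ((p + 1 + n : ℕ) : ℤ)) q (Commute.all _ _)
  have cancel : -((p + 1 : ℕ) : ℤ) + ((p + 1 + n : ℕ) : ℤ) = (n : ℤ) := by push_cast; ring
  rw [cancel, Ring.choose_natCast, Finset.Nat.sum_antidiagonal_eq_sum_range_succ_mk] at vandermonde
  rw [vandermonde]
  refine Finset.sum_congr rfl fun j _ => ?_
  have upper : ((p + 1 : ℕ) : ℤ) + (j : ℤ) - 1 = ((p + j : ℕ) : ℤ) := by push_cast; ring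
  rw [Ring.choose_neg, upper, Ring.choose_natCast, Ring.choose_natCast, Int.negOnePow_def,
    Units.smul_def]
  simp

/-- `f^{(L,k)}` as a formal polynomial, so that it can be differentiated algebraically. -/
noncomputable def fLkPoly (L k : ℕ) : ℝ[X] :=
  ∑ i ∈ Finset.Icc 1 k,
    C ((L.choose (L - k + i) : ℝ) * ((L - k + i - 2).choose (i - 1) : ℝ) * (-1 : ℝ) ^ (i - 1)) *
      X ^ (L - k + i)

theorem eval_fLkPoly (L k : ℕ) (x : ℝ) : (fLkPoly L k).eval x = fLk L k x := by
  simp [fLkPoly, fLk, eval_finsetSum]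

theorem fLkPoly_self (k : ℕ) : fLkPoly k k = C (k : ℝ) * X := by
  rcases k.eq_zero_or_pos with rfl | hk
  · simp [fLkPoly]
  rw [fLkPoly, Finset.sum_eq_single_of_mem 1 (Finset.mem_Icc.2 ⟨le_rfl, hk⟩)]
  · simp
  · intro i hi hi1
    have hlt : i - 2 < i - 1 := by have := (Finset.mem_Icc.1 hi).1; omega
    simp [Nat.choose_eq_zero_of_lt hlt]

/-- The coefficient of `x ^ (p + 2 + j)` in `f^{(L,k)}` for `L = p + q + 2` and `k = q + 1`. This
parametrization of the range `1 ≤ k < L` makes all truncated subtractions disappear. -/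
noncomputable def fLkCoeff (p q j : ℕ) : ℝ :=
  ((p + q + 2).choose (p + 2 + j) : ℝ) * ((p + j).choose j : ℝ) * (-1 : ℝ) ^ j

theorem fLkPoly_eq_sum_fLkCoeff (p q : ℕ) :
    fLkPoly (p + q + 2) (q + 1) =
      ∑ j ∈ Finset.range (q + 1), C (fLkCoeff p q j) * X ^ (p + 2 + j) := by
  rw [fLkPoly, ← Finset.Ico_add_one_right_eq_Icc, Finset.sum_Ico_eq_sum_range]
  refine Finset.sum_congr (by simp) fun j _ => ?_
  have exponent : p + q + 2 - (q + 1) + (1 + j) = p + 2 + j := by omega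
  have upper : p + 2 + j - 2 = p + j := by omega
  rw [exponent, upper, Nat.add_sub_cancel_left, fLkCoeff]

theorem sum_fLkCoeff (p q : ℕ) : ∑ j ∈ Finset.range (q + 1), fLkCoeff p q j = q + 1 := by
  have h := sum_neg_one_pow_mul_choose_mul_choose p (q + 1) q
  rw [Nat.choose_succ_self_right] at h
  have h' := congrArg (Int.cast : ℤ → ℝ) h
  push_cast at h'
  rw [← h']
  refine Finset.sum_congr rfl fun j hj => ?_
  have hjq : j ≤ q := Finset.mem_range_succ_iff.1 hj
  have reflect : (p + q + 2).choose (p + 2 + j) = (p + 1 + (q + 1)).choose (q - j) := by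
    rw [show p + q + 2 = p + 1 + (q + 1) by ring]
    exact Nat.choose_symm_of_eq_add (by omega)
  rw [fLkCoeff, reflect]
  ring

theorem fLkCoeff_mul_mul (p q j : ℕ) :
    fLkCoeff p q j * ((p + 2 + j : ℕ) : ℝ) * ((p + 1 + j : ℕ) : ℝ) =
      ((p + q + 2) * (p + q + 1) * (p + q).choose p : ℕ) * ((q.choose j : ℝ) * (-1) ^ j) := by
  have absorb₁ : ((p + q + 2 : ℕ) : ℝ) * (p + q + 1).choose (p + 1 + j) =
      (p + q + 2).choose (p + 2 + j) * (p + 2 + j : ℕ) := by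
    rw [show p + 2 + j = p + 1 + j + 1 by ring]
    exact_mod_cast Nat.add_one_mul_choose_eq (p + q + 1) (p + 1 + j)
  have absorb₂ : ((p + q + 1 : ℕ) : ℝ) * (p + q).choose (p + j) =
      (p + q + 1).choose (p + 1 + j) * (p + 1 + j : ℕ) := by
    rw [show p + 1 + j = p + j + 1 by ring]
    exact_mod_cast Nat.add_one_mul_choose_eq (p + q) (p + j)
  have trinomial : ((p + q).choose (p + j) : ℝ) * (p + j).choose j =
      (p + q).choose p * q.choose j := by
    have h := Nat.choose_mul (n := p + q) (Nat.le_add_right p j)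
    rw [Nat.choose_symm_add, Nat.add_sub_cancel_left, Nat.add_sub_cancel_left] at h
    exact_mod_cast h
  rw [fLkCoeff, Nat.cast_mul, Nat.cast_mul]
  linear_combination (-1 : ℝ) ^ j *
    (-((p + j).choose j * (p + 1 + j : ℕ)) * absorb₁
      - (p + q + 2 : ℕ) * (p + j).choose j * absorb₂
      + (p + q + 2 : ℕ) * (p + q + 1 : ℕ) * trinomial)

theorem derivative_derivative_fLkPoly (p q : ℕ) :
    derivative (derivative (fLkPoly (p + q + 2) (q + 1))) =
      C (((p + q + 2) * (p + q + 1) * (p + q).choose p : ℕ) : ℝ) * X ^ p * (1 - X) ^ q := by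
  have binomial : (1 - X : ℝ[X]) ^ q =
      ∑ j ∈ Finset.range (q + 1), C ((q.choose j : ℝ) * (-1) ^ j) * X ^ j := by
    rw [sub_eq_neg_add, add_pow]
    refine Finset.sum_congr rfl fun j _ => ?_
    rw [neg_pow, one_pow]
    simp only [map_mul, map_pow, map_neg, map_one, map_natCast]
    ring
  rw [binomial, fLkPoly_eq_sum_fLkCoeff, Finset.mul_sum]
  simp only [derivative_sum, derivative_C_mul_X_pow]
  refine Finset.sum_congr rfl fun j _ => ?_
  rw [show p + 2 + j - 1 = p + 1 + j by omega, show p + 1 + j - 1 = p + j by omega,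
    fLkCoeff_mul_mul, map_mul, pow_add]
  ring

theorem exists_eq_add_of_one_le_of_lt {L k : ℕ} (hk : 1 ≤ k) (hkL : k < L) :
    ∃ p q, L = p + q + 2 ∧ k = q + 1 :=
  ⟨L - k - 1, k - 1, by omega, by omega⟩

theorem fLk_zero (L k : ℕ) : fLk L k 0 = 0 := by
  refine Finset.sum_eq_zero fun i hi => ?_
  have hexp : L - k + i ≠ 0 := by have := (Finset.mem_Icc.1 hi).1; omega
  rw [zero_pow hexp, mul_zero]

section Properties

variable {L k : ℕ}

theorem fLk_one (hk : 1 ≤ k) (hkL : k ≤ L) : fLk L k 1 = k := by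
  rw [← eval_fLkPoly]
  rcases hkL.eq_or_lt with rfl | hlt
  · simp [fLkPoly_self]
  · obtain ⟨p, q, rfl, rfl⟩ := exists_eq_add_of_one_le_of_lt hk hlt
    simp [fLkPoly_eq_sum_fLkCoeff, eval_finsetSum, sum_fLkCoeff]

theorem derivative_derivative_fLkPoly_nonneg (hk : 1 ≤ k) (hkL : k ≤ L) {x : ℝ}
    (hx : x ∈ Set.Icc (0 : ℝ) 1) : 0 ≤ (fLkPoly L k).derivative.derivative.eval x := by
  rcases hkL.eq_or_lt with rfl | hlt
  · simp [fLkPoly_self]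
  · obtain ⟨p, q, rfl, rfl⟩ := exists_eq_add_of_one_le_of_lt hk hlt
    have hx0 : 0 ≤ x := hx.1
    have hx1 : 0 ≤ 1 - x := sub_nonneg.2 hx.2
    rw [derivative_derivative_fLkPoly]
    simp only [eval_mul, eval_pow, eval_sub, eval_one, eval_X, eval_C]
    positivity

theorem derivative_fLkPoly_zero_nonneg (hk : 1 ≤ k) (hkL : k ≤ L) :
    0 ≤ (fLkPoly L k).derivative.eval 0 := by
  rcases hkL.eq_or_lt with rfl | hlt
  · simp [fLkPoly_self]
  · obtain ⟨p, q, rfl, rfl⟩ := exists_eq_add_of_one_le_of_lt hk hlt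
    simp [fLkPoly_eq_sum_fLkCoeff, eval_finsetSum, derivative_X_pow]

theorem monotoneOn_fLk (hk : 1 ≤ k) (hkL : k ≤ L) :
    MonotoneOn (fLk L k) (Set.Icc 0 1) := by
  have hmono := monotoneOn_eval_of_derivative_nonneg (convex_Icc (0 : ℝ) 1)
    fun x hx => derivative_derivative_fLkPoly_nonneg hk hkL hx
  simpa only [eval_fLkPoly] using monotoneOn_eval_of_derivative_nonneg (convex_Icc (0 : ℝ) 1)
    fun x hx => (derivative_fLkPoly_zero_nonneg hk hkL).trans
      (hmono (Set.left_mem_Icc.2 zero_le_one) hx hx.1)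

theorem convexOn_fLk (hk : 1 ≤ k) (hkL : k ≤ L) : ConvexOn ℝ (Set.Icc 0 1) (fLk L k) := by
  simpa only [eval_fLkPoly] using convexOn_eval_of_derivative_derivative_nonneg
    (convex_Icc (0 : ℝ) 1) fun x hx => derivative_derivative_fLkPoly_nonneg hk hkL hx

theorem fLk_le_mul (hk : 1 ≤ k) (hkL : k ≤ L) {x : ℝ} (hx : x ∈ Set.Icc (0 : ℝ) 1) :
    fLk L k x ≤ k * x := by
  have hconv := (convexOn_fLk hk hkL).2 (Set.left_mem_Icc.2 zero_le_one)
    (Set.right_mem_Icc.2 zero_le_one) (sub_nonneg.2 hx.2) hx.1 (sub_add_cancel 1 x)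
  simpa [fLk_zero, fLk_one hk hkL, mul_comm] using hconv

theorem contDiff_fLk (L k : ℕ) : ContDiff ℝ 1 (fLk L k) := by
  unfold fLk
  fun_prop

end Properties

/-! ### Chains of coupled errors -/

theorem abs_le_abs_add_integral_of_sign_mul_deriv_le {x x' G : ℝ → ℝ} {a b : ℝ} (hab : a ≤ b)
    (hx : ContinuousOn x (Set.Icc a b)) (hG : ContinuousOn G (Set.Icc a b))
    (hd : ∀ t ∈ Set.Ico a b, HasDerivWithinAt x (x' t) (Set.Ici t) t)
    (hne : ∀ t ∈ Set.Ico a b, x t ≠ 0 → SignType.sign (x t) * x' t ≤ G t)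
    (heq : ∀ t ∈ Set.Ico a b, x t = 0 → |x' t| ≤ G t) :
    |x b| ≤ |x a| + ∫ t in a..b, G t := by
  have hprimitive : ContinuousOn (fun t => |x a| + ∫ s in a..t, G s) (Set.Icc a b) := by
    rw [← Set.uIcc_of_le hab] at hG ⊢
    exact continuousOn_const.add
      (intervalIntegral.continuousOn_primitive_interval (hG.integrableOn_compact isCompact_uIcc))
  have hderiv : ∀ t ∈ Set.Ico a b,
      HasDerivWithinAt (fun t => |x a| + ∫ s in a..t, G s) (G t) (Set.Ici t) t := by
    intro t ht
    have hIoo : Set.Ioo t b ∈ 𝓝[>] t := Ioo_mem_nhdsGT ht.2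
    have hsub : Set.Ioo t b ⊆ Set.Icc a b := fun s hs => ⟨ht.1.trans hs.1.le, hs.2.le⟩
    have hint : IntervalIntegrable G volume a t :=
      (hG.mono (Set.Icc_subset_Icc_right ht.2.le)).intervalIntegrable_of_Icc ht.1
    refine (intervalIntegral.integral_hasDerivWithinAt_right hint (t := Set.Ioi t)
      ⟨Set.Ioo t b, hIoo, (hG.mono hsub).aestronglyMeasurable measurableSet_Ioo⟩ ?_).const_add _
    exact ((hG t ⟨ht.1, ht.2.le⟩).mono hsub).mono_of_mem_nhdsWithin hIoo
  refine image_le_of_liminf_slope_right_le_deriv_boundary hx.abs (by simp) hprimitive hderiv ?_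
    (Set.right_mem_Icc.2 hab)
  intro t ht r hr
  by_cases hxt : x t = 0
  · simpa [slope_def_field, div_eq_inv_mul] using
      (hd t ht).liminf_right_slope_norm_le ((heq t ht hxt).trans_lt hr)
  · exact ((hasDerivAt_abs hxt).comp_hasDerivWithinAt t (hd t ht)).liminf_right_slope_le
      ((hne t ht hxt).trans_lt hr)

theorem tendsto_sub_succ_of_antitone {s : ℕ → ℝ} (hs : Antitone s)
    (hbdd : BddBelow (Set.range s)) : Tendsto (fun j => s j - s (j + 1)) atTop (𝓝 0) := by
  have hlim := tendsto_atTop_ciInf hs hbdd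
  simpa using hlim.sub (hlim.comp (tendsto_add_atTop_nat 1))

/-- A chain of errors `e j` with `e 0 = 0`, coupled by a flux `a j` from level `j` into level
`j + 1` and by the linear flux `κ * e (j + 1)` in the opposite direction. The flux `a j` has the
sign of `e j` and is at most `M * |e j|`. -/
structure IsErrorChain (κ M : ℝ) (e a : ℕ → ℝ → ℝ) : Prop where
  zero : ∀ t ∈ Set.Ici (0 : ℝ), e 0 t = 0
  continuousOn_flux : ∀ j, ContinuousOn (a j) (Set.Ici 0)
  hasDerivWithinAt : ∀ j, ∀ t ∈ Set.Ici (0 : ℝ), HasDerivWithinAt (e (j + 1))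
    (a j t - a (j + 1) t - κ * (e (j + 1) t - e (j + 2) t)) (Set.Ici 0) t
  mul_flux_nonneg : ∀ j, ∀ t ∈ Set.Ici (0 : ℝ), 0 ≤ e j t * a j t
  abs_flux_le : ∀ j, ∀ t ∈ Set.Ici (0 : ℝ), |a j t| ≤ M * |e j t|

namespace IsErrorChain

variable {κ M T : ℝ} {e a : ℕ → ℝ → ℝ}

theorem continuousOn (h : IsErrorChain κ M e a) : ∀ j, ContinuousOn (e j) (Set.Ici 0)
  | 0 => continuousOn_const.congr h.zero
  | j + 1 => fun t ht => (h.hasDerivWithinAt j t ht).continuousWithinAt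

theorem intervalIntegrable_abs (h : IsErrorChain κ M e a) (hT : 0 ≤ T) (j : ℕ) :
    IntervalIntegrable (fun t => |e j t|) volume 0 T :=
  ((h.continuousOn j).abs.mono Set.Icc_subset_Ici_self).intervalIntegrable_of_Icc hT

theorem intervalIntegrable_abs_flux (h : IsErrorChain κ M e a) (hT : 0 ≤ T) (j : ℕ) :
    IntervalIntegrable (fun t => |a j t|) volume 0 T :=
  ((h.continuousOn_flux j).abs.mono Set.Icc_subset_Ici_self).intervalIntegrable_of_Icc hT

theorem sign_mul_drift_le (h : IsErrorChain κ M e a) (hκ : 0 ≤ κ) (j : ℕ) {t : ℝ}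
    (ht : t ∈ Set.Ici (0 : ℝ)) (hne : e (j + 1) t ≠ 0) :
    SignType.sign (e (j + 1) t) * (a j t - a (j + 1) t - κ * (e (j + 1) t - e (j + 2) t)) ≤
      |a j t| - |a (j + 1) t| - κ * (|e (j + 1) t| - |e (j + 2) t|) := by
  have hmul := h.mul_flux_nonneg (j + 1) t ht
  rcases hne.lt_or_gt with hneg | hpos
  · have hflux : a (j + 1) t ≤ 0 := nonpos_of_mul_nonneg_right hmul hneg
    rw [sign_neg hneg, abs_of_neg hneg, abs_of_nonpos hflux, SignType.coe_neg_one]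
    linarith [neg_le_abs (a j t), mul_le_mul_of_nonneg_left (neg_le_abs (e (j + 2) t)) hκ]
  · have hflux : 0 ≤ a (j + 1) t := nonneg_of_mul_nonneg_right hmul hpos
    rw [sign_pos hpos, abs_of_pos hpos, abs_of_nonneg hflux, SignType.coe_one]
    linarith [le_abs_self (a j t), mul_le_mul_of_nonneg_left (le_abs_self (e (j + 2) t)) hκ]

theorem abs_drift_le_of_eq_zero (h : IsErrorChain κ M e a) (hκ : 0 ≤ κ) (j : ℕ) {t : ℝ}
    (ht : t ∈ Set.Ici (0 : ℝ)) (hzero : e (j + 1) t = 0) :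
    |a j t - a (j + 1) t - κ * (e (j + 1) t - e (j + 2) t)| ≤
      |a j t| - |a (j + 1) t| - κ * (|e (j + 1) t| - |e (j + 2) t|) := by
  have hflux : a (j + 1) t = 0 := by
    simpa [hzero] using h.abs_flux_le (j + 1) t ht
  calc |a j t - a (j + 1) t - κ * (e (j + 1) t - e (j + 2) t)|
      = |a j t + κ * e (j + 2) t| := by rw [hzero, hflux]; congr 1; ring
    _ ≤ |a j t| + |κ * e (j + 2) t| := abs_add_le _ _
    _ = |a j t| - |a (j + 1) t| - κ * (|e (j + 1) t| - |e (j + 2) t|) := by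
        rw [hzero, hflux, abs_mul, abs_of_nonneg hκ, abs_zero]; ring

theorem integral_flux_add_integral_le (h : IsErrorChain κ M e a) (hκ : 0 ≤ κ) (hT : 0 ≤ T)
    (j : ℕ) :
    (∫ t in 0..T, |a (j + 1) t|) + κ * ∫ t in 0..T, |e (j + 1) t| ≤
      |e (j + 1) 0| + (∫ t in 0..T, |a j t|) + κ * ∫ t in 0..T, |e (j + 2) t| := by
  have hIcc : Set.Icc 0 T ⊆ Set.Ici 0 := Set.Icc_subset_Ici_self
  have hbound := abs_le_abs_add_integral_of_sign_mul_deriv_le (x := e (j + 1))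
    (G := fun t => |a j t| - |a (j + 1) t| - κ * (|e (j + 1) t| - |e (j + 2) t|)) hT
    ((h.continuousOn _).mono hIcc)
    ((((h.continuousOn_flux _).abs.sub (h.continuousOn_flux _).abs).sub
      (continuousOn_const.mul ((h.continuousOn _).abs.sub (h.continuousOn _).abs))).mono hIcc)
    (fun t ht => (h.hasDerivWithinAt j t ht.1).mono (Set.Ici_subset_Ici.2 ht.1))
    (fun t ht => h.sign_mul_drift_le hκ j ht.1)
    (fun t ht => h.abs_drift_le_of_eq_zero hκ j ht.1)
  have he := h.intervalIntegrable_abs hT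
  have ha := h.intervalIntegrable_abs_flux hT
  rw [intervalIntegral.integral_sub ((ha _).sub (ha _)) (((he _).sub (he _)).const_mul κ),
    intervalIntegral.integral_sub (ha _) (ha _), intervalIntegral.integral_const_mul,
    intervalIntegral.integral_sub (he _) (he _)] at hbound
  linarith [abs_nonneg (e (j + 1) T)]

theorem integral_flux_add_integral_le_sum (h : IsErrorChain κ M e a) (hκ : 0 ≤ κ) (hT : 0 ≤ T)
    (n m : ℕ) :
    (∫ t in 0..T, |a (n + m) t|) + κ * ∫ t in 0..T, |e (n + 1) t| ≤
      ∑ i ∈ Finset.range m, |e (i + (n + 1)) 0| + (∫ t in 0..T, |a n t|) +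
        κ * ∫ t in 0..T, |e (n + m + 1) t| := by
  induction m with
  | zero => simp
  | succ m ih =>
    rw [Finset.sum_range_succ, show m + (n + 1) = n + m + 1 by ring, ← add_assoc n m 1]
    linarith [h.integral_flux_add_integral_le hκ hT (n + m)]

theorem integral_le_tsum_add_integral_flux (h : IsErrorChain κ M e a) (hκ : 0 ≤ κ) (hT : 0 ≤ T)
    (hsum : Summable fun j => |e j 0|)
    (hlim : Tendsto (fun j => ∫ t in 0..T, |e j t|) atTop (𝓝 0)) (n : ℕ) :
    κ * ∫ t in 0..T, |e (n + 1) t| ≤ ∑' i, |e (i + (n + 1)) 0| + ∫ t in 0..T, |a n t| := by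
  have hshift : Tendsto (fun m => ∫ t in 0..T, |e (n + m + 1) t|) atTop (𝓝 0) := by
    refine (hlim.comp (tendsto_add_atTop_nat (n + 1))).congr fun m => ?_
    rw [Function.comp_apply, show m + (n + 1) = n + m + 1 by ring]
  have hbound := (hshift.const_mul κ).const_add
    ((∑' i, |e (i + (n + 1)) 0|) + ∫ t in 0..T, |a n t|)
  rw [mul_zero, add_zero] at hbound
  refine ge_of_tendsto' hbound fun m => ?_
  have htail := ((summable_nat_add_iff (n + 1)).2 hsum).sum_le_tsum (Finset.range m)
    fun i _ => abs_nonneg _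
  have hflux : 0 ≤ ∫ t in 0..T, |a (n + m) t| :=
    intervalIntegral.integral_nonneg hT fun t _ => abs_nonneg _
  linarith [h.integral_flux_add_integral_le_sum hκ hT n m]

theorem integral_flux_le (h : IsErrorChain κ M e a) (hT : 0 ≤ T) (n : ℕ) :
    ∫ t in 0..T, |a n t| ≤ M * ∫ t in 0..T, |e n t| := by
  rw [← intervalIntegral.integral_const_mul]
  exact intervalIntegral.integral_mono_on hT (h.intervalIntegrable_abs_flux hT n)
    ((h.intervalIntegrable_abs hT n).const_mul M) fun t ht => h.abs_flux_le n t ht.1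

theorem exists_integral_le (h : IsErrorChain κ M e a) (hκ : 0 < κ) (hM : 0 ≤ M)
    (hsum : Summable fun j => |e j 0|)
    (hlim : ∀ T, 0 ≤ T → Tendsto (fun j => ∫ t in 0..T, |e j t|) atTop (𝓝 0)) (n : ℕ) :
    ∃ C, ∀ T, 0 ≤ T → ∫ t in 0..T, |e n t| ≤ C := by
  induction n with
  | zero =>
    refine ⟨0, fun T hT => (intervalIntegral.integral_zero_ae ?_).le⟩
    refine Eventually.of_forall fun t ht => ?_
    rw [h.zero t (Set.uIoc_of_le hT ▸ ht).1.le, abs_zero]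
  | succ n ih =>
    obtain ⟨C, hC⟩ := ih
    refine ⟨(∑' i, |e (i + (n + 1)) 0| + M * C) / κ, fun T hT => (le_div_iff₀' hκ).2 ?_⟩
    calc κ * ∫ t in 0..T, |e (n + 1) t|
        ≤ ∑' i, |e (i + (n + 1)) 0| + ∫ t in 0..T, |a n t| :=
          h.integral_le_tsum_add_integral_flux hκ.le hT hsum (hlim T hT) n
      _ ≤ ∑' i, |e (i + (n + 1)) 0| + M * ∫ t in 0..T, |e n t| := by
          gcongr; exact h.integral_flux_le hT n
      _ ≤ ∑' i, |e (i + (n + 1)) 0| + M * C := by gcongr; exact hC T hT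

theorem integrableOn (h : IsErrorChain κ M e a) (hκ : 0 < κ) (hM : 0 ≤ M)
    (hsum : Summable fun j => |e j 0|)
    (hlim : ∀ T, 0 ≤ T → Tendsto (fun j => ∫ t in 0..T, |e j t|) atTop (𝓝 0)) (n : ℕ) :
    IntegrableOn (e n) (Set.Ioi 0) := by
  obtain ⟨C, hC⟩ := h.exists_integral_le hκ hM hsum hlim n
  refine integrableOn_Ioi_of_intervalIntegral_norm_bounded C 0 (fun T : ℝ => ?_) tendsto_id
    ((eventually_ge_atTop 0).mono hC)
  exact (((h.continuousOn n).mono Set.Icc_subset_Ici_self).integrableOn_Icc).mono_set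
    Set.Ioc_subset_Icc_self

theorem integrableOn_flux (h : IsErrorChain κ M e a) {n : ℕ}
    (hint : IntegrableOn (e n) (Set.Ioi 0)) : IntegrableOn (a n) (Set.Ioi 0) := by
  refine Integrable.mono' (hint.norm.const_mul M)
    (((h.continuousOn_flux n).mono Set.Ioi_subset_Ici_self).aestronglyMeasurable
      measurableSet_Ioi) ?_
  exact (ae_restrict_mem measurableSet_Ioi).mono fun t ht =>
    h.abs_flux_le n t (Set.Ioi_subset_Ici_self ht)

theorem tendsto_zero (h : IsErrorChain κ M e a) (hκ : 0 < κ) (hM : 0 ≤ M)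
    (hsum : Summable fun j => |e j 0|)
    (hlim : ∀ T, 0 ≤ T → Tendsto (fun j => ∫ t in 0..T, |e j t|) atTop (𝓝 0)) (j : ℕ) :
    Tendsto (e j) atTop (𝓝 0) := by
  have he := h.integrableOn hκ hM hsum hlim
  cases j with
  | zero => exact tendsto_const_nhds.congr' ((eventually_ge_atTop 0).mono fun t ht =>
      (h.zero t ht).symm)
  | succ j =>
    refine tendsto_zero_of_hasDerivAt_of_integrableOn_Ioi (a := 0)
      (fun t ht => (h.hasDerivWithinAt j t (Set.Ioi_subset_Ici_self ht)).hasDerivAt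
        (Ici_mem_nhds ht)) ?_ (he _)
    exact ((h.integrableOn_flux (he j)).sub (h.integrableOn_flux (he (j + 1)))).sub
      (((he (j + 1)).sub (he (j + 2))).const_mul κ)

end IsErrorChain

/-! ### The mean-field system -/

namespace InUbar

variable {w : ℕ → ℝ}

theorem antitone (hw : InUbar w) : Antitone w := antitone_nat_of_succ_le hw.2.1

theorem mem_Icc (hw : InUbar w) (j : ℕ) : w j ∈ Set.Icc (0 : ℝ) 1 :=
  ⟨hw.2.2 j, hw.1 ▸ hw.antitone (Nat.zero_le j)⟩

end InUbar

/-- A map `f` on `[0, 1]` that the mean-field system can use as arrival intensity when servers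
work at rate `κ`; `fLk L k` is one with `κ = k`. The bound `f x ≤ κ * x` says that for `lam < 1`
the arrival intensity `lam * f x` stays below the service intensity `κ * x`. -/
structure IsArrivalRate (f : ℝ → ℝ) (κ : ℝ) : Prop where
  map_zero : f 0 = 0
  monotoneOn : MonotoneOn f (Set.Icc 0 1)
  le_mul : ∀ x ∈ Set.Icc (0 : ℝ) 1, f x ≤ κ * x
  exists_lipschitzOnWith : ∃ K, LipschitzOnWith K f (Set.Icc 0 1)

theorem isArrivalRate_fLk {L k : ℕ} (hk : 1 ≤ k) (hkL : k ≤ L) : IsArrivalRate (fLk L k) k where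
  map_zero := fLk_zero L k
  monotoneOn := monotoneOn_fLk hk hkL
  le_mul := fun _ hx => fLk_le_mul hk hkL hx
  exists_lipschitzOnWith := (contDiff_fLk L k).contDiffOn.exists_lipschitzOnWith one_ne_zero
    (convex_Icc 0 1) isCompact_Icc

/-- The right-hand side of the equation for level `j + 1` of the mean-field ODE system with a
general arrival intensity `f` and service rate `κ`, at the state `w`. -/
def meanFieldDrift (f : ℝ → ℝ) (lam κ : ℝ) (w : ℕ → ℝ) (j : ℕ) : ℝ :=
  lam * (f (w j) - f (w (j + 1))) - κ * (w (j + 1) - w (j + 2))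

/-- A `Ū`-valued solution on `[0, ∞)` of the mean-field ODE system with a general arrival
intensity `f` and service rate `κ`; its initial condition is `u 0`. -/
structure IsMeanFieldSolution (f : ℝ → ℝ) (lam κ : ℝ) (u : ℝ → ℕ → ℝ) : Prop where
  inUbar : ∀ t ∈ Set.Ici (0 : ℝ), InUbar (u t)
  hasDerivWithinAt : ∀ j, ∀ t ∈ Set.Ici (0 : ℝ),
    HasDerivWithinAt (fun τ => u τ (j + 1)) (meanFieldDrift f lam κ (u t) j) (Set.Ici 0) t

theorem IsMFSol.isMeanFieldSolution {L k : ℕ} {lam : ℝ} {g : ℕ → ℝ} {u : ℝ → ℕ → ℝ}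
    (hu : IsMFSol L k lam g u) : IsMeanFieldSolution (fLk L k) lam k u :=
  ⟨hu.2.1, fun j t ht => hu.2.2 (j + 1) (Nat.le_add_left 1 j) t ht⟩

section MeanField

variable {f : ℝ → ℝ} {lam κ : ℝ} {u : ℝ → ℕ → ℝ} {w ubar : ℕ → ℝ}

namespace IsArrivalRate

theorem map_nonneg (hf : IsArrivalRate f κ) {x : ℝ} (hx : x ∈ Set.Icc (0 : ℝ) 1) : 0 ≤ f x :=
  hf.map_zero ▸ hf.monotoneOn (Set.left_mem_Icc.2 zero_le_one) hx hx.1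

theorem map_le (hf : IsArrivalRate f κ) {x : ℝ} (hx : x ∈ Set.Icc (0 : ℝ) 1) : f x ≤ κ := by
  have hone : (1 : ℝ) ∈ Set.Icc (0 : ℝ) 1 := Set.right_mem_Icc.2 zero_le_one
  simpa using (hf.monotoneOn hx hone hx.2).trans (hf.le_mul 1 hone)

theorem continuousOn (hf : IsArrivalRate f κ) : ContinuousOn f (Set.Icc 0 1) :=
  hf.exists_lipschitzOnWith.choose_spec.continuousOn

theorem sub_mul_map_sub_nonneg (hf : IsArrivalRate f κ) {x y : ℝ} (hx : x ∈ Set.Icc (0 : ℝ) 1)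
    (hy : y ∈ Set.Icc (0 : ℝ) 1) : 0 ≤ (x - y) * (f x - f y) := by
  rcases le_total x y with hxy | hyx
  · exact mul_nonneg_of_nonpos_of_nonpos (sub_nonpos.2 hxy)
      (sub_nonpos.2 (hf.monotoneOn hx hy hxy))
  · exact mul_nonneg (sub_nonneg.2 hyx) (sub_nonneg.2 (hf.monotoneOn hy hx hyx))

theorem abs_meanFieldDrift_le (hf : IsArrivalRate f κ) (hw : InUbar w) (j : ℕ) :
    |meanFieldDrift f lam κ w j| ≤ |lam| * κ + κ := by
  have hκ : 0 ≤ κ := (hf.map_nonneg (hw.mem_Icc 0)).trans (hf.map_le (hw.mem_Icc 0))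
  have harrival : |f (w j) - f (w (j + 1))| ≤ κ := by
    simpa using abs_sub_le_of_le_of_le (hf.map_nonneg (hw.mem_Icc j)) (hf.map_le (hw.mem_Icc j))
      (hf.map_nonneg (hw.mem_Icc (j + 1))) (hf.map_le (hw.mem_Icc (j + 1)))
  have hservice : |w (j + 1) - w (j + 2)| ≤ 1 := by
    simpa using abs_sub_le_of_le_of_le (hw.mem_Icc (j + 1)).1 (hw.mem_Icc (j + 1)).2
      (hw.mem_Icc (j + 2)).1 (hw.mem_Icc (j + 2)).2
  calc |meanFieldDrift f lam κ w j|
      ≤ |lam * (f (w j) - f (w (j + 1)))| + |κ * (w (j + 1) - w (j + 2))| := abs_sub _ _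
    _ = |lam| * |f (w j) - f (w (j + 1))| + κ * |w (j + 1) - w (j + 2)| := by
        rw [abs_mul, abs_mul, abs_of_nonneg hκ]
    _ ≤ |lam| * κ + κ * 1 := by gcongr
    _ = |lam| * κ + κ := by rw [mul_one]

theorem tendsto_meanFieldDrift (hf : IsArrivalRate f κ) (hw : InUbar w) :
    Tendsto (meanFieldDrift f lam κ w) atTop (𝓝 0) := by
  have harrival := tendsto_sub_succ_of_antitone (s := fun j => f (w j))
    (fun _ _ hij => hf.monotoneOn (hw.mem_Icc _) (hw.mem_Icc _) (hw.antitone hij))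
    ⟨0, by rintro _ ⟨j, rfl⟩; exact hf.map_nonneg (hw.mem_Icc j)⟩
  have hservice := tendsto_sub_succ_of_antitone hw.antitone
    ⟨0, by rintro _ ⟨j, rfl⟩; exact (hw.mem_Icc j).1⟩
  have hdiff := (harrival.const_mul lam).sub
    ((hservice.comp (tendsto_add_atTop_nat 1)).const_mul κ)
  rw [mul_zero, mul_zero, sub_zero] at hdiff
  exact hdiff

theorem mem_Icc_zero_pow (hf : IsArrivalRate f κ) (hκ : 0 < κ) (hlam0 : 0 ≤ lam)
    (hlam1 : lam ≤ 1) (h0 : ubar 0 = 1) (hrec : ∀ m, ubar (m + 1) = lam / κ * f (ubar m)) (m : ℕ) :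
    ubar m ∈ Set.Icc 0 (lam ^ m) := by
  induction m with
  | zero => simp [h0]
  | succ m ih =>
    have hmem : ubar m ∈ Set.Icc (0 : ℝ) 1 := ⟨ih.1, ih.2.trans (pow_le_one₀ hlam0 hlam1)⟩
    have hratio : 0 ≤ lam / κ := by positivity
    refine ⟨hrec m ▸ mul_nonneg hratio (hf.map_nonneg hmem), ?_⟩
    calc ubar (m + 1) = lam / κ * f (ubar m) := hrec m
      _ ≤ lam / κ * (κ * lam ^ m) := by
          gcongr
          exact (hf.le_mul _ hmem).trans (mul_le_mul_of_nonneg_left ih.2 hκ.le)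
      _ = lam ^ (m + 1) := by rw [← mul_assoc, div_mul_cancel₀ lam hκ.ne', pow_succ']

theorem mul_succ_eq_of_meanFieldDrift_eq_zero (hf : IsArrivalRate f κ) (hw : InUbar w)
    (hlim : Tendsto w atTop (𝓝 0)) (hdrift : ∀ j, meanFieldDrift f lam κ w j = 0) (j : ℕ) :
    κ * w (j + 1) = lam * f (w j) := by
  have hconst : ∀ j, κ * w (j + 1) - lam * f (w j) = κ * w 1 - lam * f (w 0) := by
    intro j
    induction j with
    | zero => rfl
    | succ j ih =>
      have := hdrift j
      rw [meanFieldDrift] at this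
      linarith
  have hmap : Tendsto (fun j => f (w j)) atTop (𝓝 0) := by
    have hcont := hf.continuousOn 0 (Set.left_mem_Icc.2 zero_le_one)
    rw [ContinuousWithinAt, hf.map_zero] at hcont
    exact hcont.comp (tendsto_nhdsWithin_iff.2 ⟨hlim, Eventually.of_forall hw.mem_Icc⟩)
  have hflow : Tendsto (fun j => κ * w (j + 1) - lam * f (w j)) atTop (𝓝 0) := by
    simpa using ((hlim.comp (tendsto_add_atTop_nat 1)).const_mul κ).sub (hmap.const_mul lam)
  have hzero : κ * w 1 - lam * f (w 0) = 0 :=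
    tendsto_nhds_unique (tendsto_const_nhds.congr fun j => (hconst j).symm) hflow
  exact sub_eq_zero.1 ((hconst j).trans hzero)

theorem eq_of_meanFieldDrift_eq_zero (hf : IsArrivalRate f κ) (hκ : κ ≠ 0) (h0 : ubar 0 = 1)
    (hrec : ∀ m, ubar (m + 1) = lam / κ * f (ubar m)) (hw : InUbar w)
    (hlim : Tendsto w atTop (𝓝 0)) (hdrift : ∀ j, meanFieldDrift f lam κ w j = 0) : w = ubar := by
  funext j
  induction j with
  | zero => rw [h0, hw.1]
  | succ j ih =>
    rw [hrec, ← ih, div_mul_eq_mul_div, eq_div_iff hκ, mul_comm,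
      hf.mul_succ_eq_of_meanFieldDrift_eq_zero hw hlim hdrift]

end IsArrivalRate

namespace IsMeanFieldSolution

theorem continuousOn (hu : IsMeanFieldSolution f lam κ u) :
    ∀ j, ContinuousOn (fun t => u t j) (Set.Ici 0)
  | 0 => continuousOn_const.congr fun t ht => (hu.inUbar t ht).1
  | j + 1 => fun t ht => (hu.hasDerivWithinAt j t ht).continuousWithinAt

theorem continuousOn_comp (hu : IsMeanFieldSolution f lam κ u) (hf : IsArrivalRate f κ) (j : ℕ) :
    ContinuousOn (fun t => f (u t j)) (Set.Ici 0) :=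
  hf.continuousOn.comp (hu.continuousOn j) fun t ht => (hu.inUbar t ht).mem_Icc j

theorem continuousOn_meanFieldDrift (hu : IsMeanFieldSolution f lam κ u) (hf : IsArrivalRate f κ)
    (j : ℕ) : ContinuousOn (fun t => meanFieldDrift f lam κ (u t) j) (Set.Ici 0) :=
  (continuousOn_const.mul ((hu.continuousOn_comp hf _).sub (hu.continuousOn_comp hf _))).sub
    (continuousOn_const.mul ((hu.continuousOn _).sub (hu.continuousOn _)))

theorem tendsto_atTop_zero (hu : IsMeanFieldSolution f lam κ u) (hf : IsArrivalRate f κ)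
    (hinit : Tendsto (u 0) atTop (𝓝 0)) {T : ℝ} (hT : 0 ≤ T) : Tendsto (u T) atTop (𝓝 0) := by
  have hIcc : Set.Icc 0 T ⊆ Set.Ici 0 := Set.Icc_subset_Ici_self
  have hftc (j : ℕ) : ∫ t in 0..T, meanFieldDrift f lam κ (u t) j = u T (j + 1) - u 0 (j + 1) :=
    intervalIntegral.integral_eq_sub_of_hasDerivAt_of_le hT ((hu.continuousOn _).mono hIcc)
      (fun t ht => (hu.hasDerivWithinAt j t ht.1.le).hasDerivAt (Ici_mem_nhds ht.1))
      (((hu.continuousOn_meanFieldDrift hf j).mono hIcc).intervalIntegrable_of_Icc hT)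
  have hdrift : Tendsto (fun j => ∫ t in 0..T, meanFieldDrift f lam κ (u t) j) atTop
      (𝓝 (∫ _ in 0..T, 0)) := by
    have hIoc : Set.uIoc 0 T ⊆ Set.Ici 0 := by
      rw [Set.uIoc_of_le hT]; exact Set.Ioc_subset_Icc_self.trans hIcc
    exact intervalIntegral.tendsto_integral_filter_of_dominated_convergence
      (fun _ => |lam| * κ + κ)
      (Eventually.of_forall fun j => ((hu.continuousOn_meanFieldDrift hf j).mono
        hIoc).aestronglyMeasurable measurableSet_uIoc)
      (Eventually.of_forall fun j => Eventually.of_forall fun t ht =>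
        hf.abs_meanFieldDrift_le (hu.inUbar t (hIoc ht)) j)
      intervalIntegrable_const
      (Eventually.of_forall fun t ht => hf.tendsto_meanFieldDrift (hu.inUbar t (hIoc ht)))
  rw [← tendsto_add_atTop_iff_nat 1] at hinit ⊢
  simpa [hftc] using hdrift.add hinit

theorem tendsto_integral_abs_sub (hu : IsMeanFieldSolution f lam κ u) (hf : IsArrivalRate f κ)
    (hinit : Tendsto (u 0) atTop (𝓝 0)) (hubar : ∀ m, ubar m ∈ Set.Icc (0 : ℝ) 1)
    (hlim : Tendsto ubar atTop (𝓝 0)) {T : ℝ} (hT : 0 ≤ T) :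
    Tendsto (fun j => ∫ t in 0..T, |u t j - ubar j|) atTop (𝓝 0) := by
  have hIoc : Set.uIoc 0 T ⊆ Set.Ici 0 := by
    rw [Set.uIoc_of_le hT]; exact fun t ht => ht.1.le
  suffices h : Tendsto (fun j => ∫ t in 0..T, |u t j - ubar j|) atTop (𝓝 (∫ _ in 0..T, 0)) by
    rwa [intervalIntegral.integral_zero] at h
  refine intervalIntegral.tendsto_integral_filter_of_dominated_convergence (fun _ => 1)
    (Eventually.of_forall fun j => (((hu.continuousOn j).sub continuousOn_const).abs.mono
      hIoc).aestronglyMeasurable measurableSet_uIoc)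
    (Eventually.of_forall fun j => Eventually.of_forall fun t ht => ?_) intervalIntegrable_const
    (Eventually.of_forall fun t ht => ?_)
  · have hmem := (hu.inUbar t (hIoc ht)).mem_Icc j
    simpa using abs_sub_le_of_le_of_le hmem.1 hmem.2 (hubar j).1 (hubar j).2
  · simpa using ((hu.tendsto_atTop_zero hf hinit (hIoc ht)).sub hlim).abs

theorem exists_isErrorChain (hu : IsMeanFieldSolution f lam κ u) (hf : IsArrivalRate f κ)
    (hlam : 0 ≤ lam) (h0 : ubar 0 = 1) (hubar : ∀ m, ubar m ∈ Set.Icc (0 : ℝ) 1)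
    (hrec : ∀ m, κ * ubar (m + 1) = lam * f (ubar m)) :
    ∃ M, 0 ≤ M ∧ IsErrorChain κ M (fun j t => u t j - ubar j)
      (fun j t => lam * (f (u t j) - f (ubar j))) := by
  obtain ⟨K, hK⟩ := hf.exists_lipschitzOnWith
  have hmem : ∀ j, ∀ t ∈ Set.Ici (0 : ℝ), u t j ∈ Set.Icc (0 : ℝ) 1 :=
    fun j t ht => (hu.inUbar t ht).mem_Icc j
  refine ⟨lam * K, by positivity, ?_, fun j => ?_, fun j t ht => ?_, fun j t ht => ?_,
    fun j t ht => ?_⟩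
  · intro t ht
    simp only [(hu.inUbar t ht).1, h0, sub_self]
  · exact continuousOn_const.mul ((hu.continuousOn_comp hf j).sub continuousOn_const)
  · refine ((hu.hasDerivWithinAt j t ht).sub_const (ubar (j + 1))).congr_deriv ?_
    rw [meanFieldDrift]
    linear_combination hrec (j + 1) - hrec j
  · rw [mul_left_comm]
    exact mul_nonneg hlam (hf.sub_mul_map_sub_nonneg (hmem j t ht) (hubar j))
  · rw [abs_mul, abs_of_nonneg hlam, mul_assoc]
    exact mul_le_mul_of_nonneg_left (hK.dist_le_mul _ (hmem j t ht) _ (hubar j)) hlam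

end IsMeanFieldSolution

theorem mfSol_stable_fixed_point_general (hf : IsArrivalRate f κ) (hκ : 0 < κ) (hlam0 : 0 ≤ lam)
    (hlam1 : lam < 1) (h0 : ubar 0 = 1) (hrec : ∀ m, ubar (m + 1) = lam / κ * f (ubar m))
    (hu : IsMeanFieldSolution f lam κ u) (hsum : Summable (u 0)) :
    (∀ j, Tendsto (fun t => u t j - ubar j) atTop (𝓝 0)) ∧
    ∀ w, InUbar w → Tendsto w atTop (𝓝 0) → (∀ j, meanFieldDrift f lam κ w j = 0) → w = ubar := by
  refine ⟨?_, fun w hw hlim hdrift => hf.eq_of_meanFieldDrift_eq_zero hκ.ne' h0 hrec hw hlim hdrift⟩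
  have hpow := hf.mem_Icc_zero_pow hκ hlam0 hlam1.le h0 hrec
  have hmem : ∀ m, ubar m ∈ Set.Icc (0 : ℝ) 1 := fun m =>
    ⟨(hpow m).1, (hpow m).2.trans (pow_le_one₀ hlam0 hlam1.le)⟩
  have hubar_sum : Summable ubar := .of_nonneg_of_le (fun m => (hpow m).1) (fun m => (hpow m).2)
    (summable_geometric_of_lt_one hlam0 hlam1)
  have hbalance : ∀ m, κ * ubar (m + 1) = lam * f (ubar m) := fun m => by
    rw [hrec, ← mul_assoc, mul_div_cancel₀ lam hκ.ne']
  obtain ⟨M, hM, hchain⟩ := hu.exists_isErrorChain hf hlam0 h0 hmem hbalance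
  exact hchain.tendsto_zero hκ hM (hsum.sub hubar_sum).abs fun T hT =>
    hu.tendsto_integral_abs_sub hf hsum.tendsto_atTop_zero hmem hubar_sum.tendsto_atTop_zero hT

end MeanField

/-- Theorem 2.3 (ii): for `0 < λ < 1` and any `Ū`-valued solution `u` of the
mean-field ODE system with initial condition `g ∈ U`, `u_j(t) → ū_j` as `t → ∞` for every
`j`; in particular `ū` is the unique fixed point of the mean-field ODE system in `U`. -/
theorem mfSol_stable_fixed_point (L k : ℕ) (hk : 1 ≤ k) (hkL : k ≤ L)
    (lam : ℝ) (hlam0 : 0 < lam) (hlam1 : lam < 1)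
    (ubar : ℕ → ℝ) (h0 : ubar 0 = 1)
    (hrec : ∀ m : ℕ, ubar (m + 1) = lam / k * fLk L k (ubar m))
    (g : ℕ → ℝ) (hg : InUbar g) (hgU : Summable (fun i : ℕ => g (i + 1)))
    (u : ℝ → ℕ → ℝ) (hu : IsMFSol L k lam g u) :
    (∀ j : ℕ, Tendsto (fun t : ℝ => u t j - ubar j) atTop (nhds 0)) ∧
    (∀ w : ℕ → ℝ, InUbar w → Summable (fun i : ℕ => w (i + 1)) →
      (∀ j, 1 ≤ j → lam * (fLk L k (w (j - 1)) - fLk L k (w j)) = k * (w j - w (j + 1))) →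
      w = ubar) := by
  obtain ⟨hstable, hunique⟩ := mfSol_stable_fixed_point_general (isArrivalRate_fLk hk hkL)
    (Nat.cast_pos.2 hk) hlam0.le hlam1 h0 hrec hu.isMeanFieldSolution
    ((summable_nat_add_iff 1).1 (by simpa only [hu.1] using hgU))
  exact ⟨hstable, fun w hw hws hfix =>
    hunique w hw ((summable_nat_add_iff 1).1 hws).tendsto_atTop_zero
      fun j => sub_eq_zero.2 (hfix (j + 1) (Nat.le_add_left 1 j))⟩
end

section
/- Let 1 ≤ k ≤ L be integers, 0 < λ < 1, and let u be a solution of the mean-field ODE system taking values in Ū with initial condition g ∈ U satisfying g_j ≥ ū_j for all j ≥ 0. Then u_1(t) ≥ λ for all t ≥ 0, and the function t ↦ v_1(u(t)) is nonincreasing on [0,∞); in particular v_1(u(t)) ≤ v_1(g) for all t ≥ 0. -/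
open Finset Set

/-!
For `X ~ Bin(L, x)` the rate polynomial is `f(x) = E[(X - (L - k))⁺]`: Newton's forward difference
formula for `m ↦ (m - (L - k))⁺` at `0` gives exactly the coefficients of `f`. Hence `f` is
nonnegative and nondecreasing on `[0, 1]`, with `f(1) = k`.

Since `f` is nondecreasing, the ODE system is cooperative: if `w` and `u` are solutions with
`w(0) ≤ u(0)`, then `w(t) ≤ u(t)`. As `f` is also Lipschitz, this follows by iterating the bound
`w_j - u_j ≤ (C t)ⁿ / n!`. The sequence `ū` is a stationary solution, so `λ = ū₁ ≤ u₁(t)`.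

Summing the equations for `u_1, …, u_N` telescopes to
`k (λ - u_1) - λ f(u_N) + k u_{N+1} ≤ k u_{N+1}`. By monotonicity in the index, `u_{N+1}` is at most
`1 / (N + 1)` times a bounded partial sum, so the increments of `v_1` are nonpositive in the limit.
-/

/-- The mean `E[φ(X)]` for `X ~ Bin(n, x)`, i.e. the Bernstein polynomial of `φ`. It is a polynomial
in `x`, considered for all real `x`. -/
noncomputable def binomialMean (n : ℕ) (φ : ℕ → ℝ) (x : ℝ) : ℝ :=
  ∑ m ∈ Finset.range (n + 1), n.choose m * x ^ m * (1 - x) ^ (n - m) * φ m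

section BinomialMean

variable {n : ℕ} {φ : ℕ → ℝ} {x : ℝ}

lemma binomialMean_one_right : binomialMean n φ 1 = φ n := by
  rw [binomialMean, Finset.sum_eq_single_of_mem n (by simp)]
  · simp
  · intro m hm hmn
    rw [sub_self, zero_pow (by grind)]
    simp

lemma binomialMean_nonneg (hφ : ∀ m, 0 ≤ φ m) (hx : x ∈ Set.Icc 0 1) : 0 ≤ binomialMean n φ x := by
  have hx₀ : 0 ≤ x := hx.1
  have hx₁ : 0 ≤ 1 - x := sub_nonneg.2 hx.2
  exact Finset.sum_nonneg fun m _ => mul_nonneg (by positivity) (hφ m)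

lemma binomialMean_succ (n : ℕ) (φ : ℕ → ℝ) (x : ℝ) :
    binomialMean (n + 1) φ x = binomialMean n φ x + x * binomialMean n (fwdDiff 1 φ) x := by
  have pascal := Finset.sum_choose_succ_mul (fun i j => x ^ i * (1 - x) ^ j * φ i) n
  simp only [binomialMean, fwdDiff, mul_assoc] at pascal ⊢
  rw [pascal, Finset.mul_sum, ← Finset.sum_add_distrib, ← Finset.sum_add_distrib]
  refine Finset.sum_congr rfl fun i hi => ?_
  rw [Nat.sub_add_comm (Finset.mem_range_succ_iff.1 hi)]
  ring

lemma binomialMean_eq_sum_fwdDiff (n : ℕ) (φ : ℕ → ℝ) (x : ℝ) :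
    binomialMean n φ x = ∑ j ∈ Finset.range (n + 1), n.choose j * x ^ j * (fwdDiff 1)^[j] φ 0 := by
  induction n generalizing φ with
  | zero => simp [binomialMean]
  | succ n ih =>
    have pascal := Finset.sum_choose_succ_mul (fun j _ => x ^ j * (fwdDiff 1)^[j] φ 0) n
    simp only [mul_assoc] at ih pascal ⊢
    rw [pascal, binomialMean_succ, ih, ih, Finset.mul_sum]
    simp only [Function.iterate_succ_apply]
    congr 1
    exact Finset.sum_congr rfl fun j _ => by ring

lemma hasDerivAt_binomialMean (n : ℕ) (φ : ℕ → ℝ) (x : ℝ) :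
    HasDerivAt (binomialMean (n + 1) φ) ((n + 1) * binomialMean n (fwdDiff 1 φ) x) x := by
  rw [funext (binomialMean_eq_sum_fwdDiff (n + 1) φ), binomialMean_eq_sum_fwdDiff]
  simp only [Finset.sum_range_succ' _ (n + 1), pow_zero]
  refine ((HasDerivAt.fun_sum fun j _ =>
    ((hasDerivAt_pow (j + 1) x).const_mul _).mul_const _).add_const _).congr_deriv ?_
  rw [Finset.mul_sum]
  refine Finset.sum_congr rfl fun j _ => ?_
  have h : ((n + 1 : ℕ) : ℝ) * n.choose j = (n + 1).choose (j + 1) * (j + 1 : ℕ) :=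
    mod_cast Nat.add_one_mul_choose_eq n j
  rw [Function.iterate_succ_apply, Nat.add_sub_cancel]
  push_cast at h ⊢
  linear_combination -(x ^ j * (fwdDiff 1)^[j] (fwdDiff 1 φ) 0) * h

lemma binomialMean_monotoneOn (hφ : Monotone φ) : MonotoneOn (binomialMean n φ) (Set.Icc 0 1) := by
  cases n with
  | zero => simp [binomialMean, MonotoneOn]
  | succ n =>
    refine monotoneOn_of_hasDerivWithinAt_nonneg (convex_Icc 0 1)
      (fun x _ => (hasDerivAt_binomialMean n φ x).continuousAt.continuousWithinAt)
      (fun x _ => (hasDerivAt_binomialMean n φ x).hasDerivWithinAt) fun x hx => ?_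
    have hΔ (m : ℕ) : 0 ≤ fwdDiff 1 φ m := sub_nonneg.2 (hφ m.le_succ)
    exact mul_nonneg (by positivity) (binomialMean_nonneg hΔ (interior_subset hx))

end BinomialMean

lemma fwdDiff_natSub (a : ℕ) :
    fwdDiff 1 (fun m : ℕ => ((m - a : ℕ) : ℝ)) = fun m => if a ≤ m then 1 else 0 := by
  ext m
  rw [fwdDiff, sub_eq_iff_eq_add]
  split_ifs with h
  · rw [Nat.sub_add_comm h]
    push_cast
    ring
  · rw [Nat.sub_eq_zero_of_le (by omega), Nat.sub_eq_zero_of_le (by omega), zero_add]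

lemma fwdDiff_fwdDiff_natSub_succ (a : ℕ) :
    fwdDiff 1 (fwdDiff 1 fun m : ℕ => ((m - (a + 1) : ℕ) : ℝ)) = Pi.single a 1 := by
  ext m
  rw [fwdDiff_natSub]
  simp only [fwdDiff, Pi.single_apply]
  grind

lemma fwdDiff_iter_single_apply_zero {a n : ℕ} (h : a ≤ n) :
    (fwdDiff 1)^[n] (Pi.single a (1 : ℝ)) 0 = (-1) ^ (n - a) * n.choose a := by
  rw [fwdDiff_iter_eq_sum_shift,
    Finset.sum_eq_single_of_mem a (Finset.mem_range_succ_iff.2 h) fun m _ hm => by simp [hm]]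
  simp

lemma fwdDiff_iter_natSub_apply_zero_of_le {a j : ℕ} (h : j ≤ a) :
    (fwdDiff 1)^[j] (fun m : ℕ => ((m - a : ℕ) : ℝ)) 0 = 0 := by
  rw [fwdDiff_iter_eq_sum_shift]
  refine Finset.sum_eq_zero fun m hm => ?_
  have hma : m - a = 0 := by grind
  simp [hma]

lemma fwdDiff_iter_natSub_apply_zero (a i : ℕ) :
    (fwdDiff 1)^[a + 1 + i] (fun m : ℕ => ((m - a : ℕ) : ℝ)) 0 =
      (-1) ^ i * (a + i - 1).choose i := by
  cases a with
  | zero =>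
    rw [zero_add, Nat.add_comm 1, Function.iterate_succ_apply, fwdDiff_natSub]
    cases i with
    | zero => simp
    | succ i =>
      have hΔ : fwdDiff 1 (fun m : ℕ => if 0 ≤ m then (1 : ℝ) else 0) = fun _ => 0 := by
        simp only [Nat.zero_le, if_true, fwdDiff_const]
      rw [Function.iterate_succ_apply, hΔ, Function.iterate_fixed (fwdDiff_const 1 0)]
      simp
  | succ a =>
    rw [show a + 1 + 1 + i = a + i + 2 by omega, Function.iterate_add_apply,
      Function.iterate_succ_apply, Function.iterate_one, fwdDiff_fwdDiff_natSub_succ,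
      fwdDiff_iter_single_apply_zero (by omega), Nat.add_sub_cancel_left, Nat.add_right_comm,
      Nat.add_sub_cancel, Nat.choose_symm_add]

section RatePolynomial

variable {L k : ℕ} {x : ℝ}

lemma fLk_eq_binomialMean (hkL : k ≤ L) :
    fLk L k = binomialMean L fun m => ((m - (L - k) : ℕ) : ℝ) := by
  obtain ⟨a, rfl⟩ := Nat.exists_eq_add_of_le' hkL
  ext x
  have h_low : ∑ j ∈ Finset.range (a + 1), ((a + k).choose j : ℝ) * x ^ j *
      (fwdDiff 1)^[j] (fun m : ℕ => ((m - a : ℕ) : ℝ)) 0 = 0 :=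
    Finset.sum_eq_zero fun j hj => by
      rw [fwdDiff_iter_natSub_apply_zero_of_le (Finset.mem_range_succ_iff.1 hj), mul_zero]
  have h_Icc : Finset.Icc 1 k = Finset.Ico (0 + 1) (k + 1) := rfl
  rw [binomialMean_eq_sum_fwdDiff, Nat.add_sub_cancel, Nat.add_right_comm,
    Finset.sum_range_add, h_low, zero_add, fLk, Nat.add_sub_cancel, h_Icc,
    ← Finset.sum_Ico_add', Finset.range_eq_Ico]
  refine Finset.sum_congr rfl fun i _ => ?_
  rw [fwdDiff_iter_natSub_apply_zero, show a + (i + 1) - 2 = a + i - 1 by omega,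
    Nat.add_sub_cancel, show a + (i + 1) = a + 1 + i by omega]
  ring

lemma fLk_one_right (hkL : k ≤ L) : fLk L k 1 = k := by
  simp [fLk_eq_binomialMean hkL, binomialMean_one_right, Nat.sub_sub_self hkL]

lemma fLk_monotoneOn (hkL : k ≤ L) : MonotoneOn (fLk L k) (Set.Icc 0 1) := by
  rw [fLk_eq_binomialMean hkL]
  exact binomialMean_monotoneOn fun m m' h => mod_cast Nat.sub_le_sub_right h _

lemma fLk_nonneg (hkL : k ≤ L) (hx : x ∈ Set.Icc 0 1) : 0 ≤ fLk L k x := by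
  rw [fLk_eq_binomialMean hkL]
  exact binomialMean_nonneg (fun m => Nat.cast_nonneg _) hx

lemma fLk_lipschitzOnWith (L k : ℕ) : ∃ K, LipschitzOnWith K (fLk L k) (Set.Icc 0 1) := by
  have hf : ContDiff ℝ 1 (fLk L k) := by
    unfold fLk
    fun_prop
  exact hf.contDiffOn.exists_lipschitzOnWith one_ne_zero (convex_Icc 0 1) isCompact_Icc

end RatePolynomial

-- The strict fencing theorem, applied to the barriers `B x + δ * (1 + (x - a))`, only looks at
-- points where `f` lies above `B`.
lemma image_le_of_deriv_right_le_of_lt {f f' B B' : ℝ → ℝ} {a b : ℝ}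
    (hf : ContinuousOn f (Set.Icc a b))
    (hf' : ∀ x ∈ Set.Ico a b, HasDerivWithinAt f (f' x) (Set.Ici x) x)
    (ha : f a ≤ B a) (hB : ContinuousOn B (Set.Icc a b))
    (hB' : ∀ x ∈ Set.Ico a b, HasDerivWithinAt B (B' x) (Set.Ici x) x)
    (bound : ∀ x ∈ Set.Ico a b, B x < f x → f' x ≤ B' x) :
    ∀ ⦃x⦄, x ∈ Set.Icc a b → f x ≤ B x := by
  intro x hx
  have barrier (δ : ℝ) (hδ : 0 < δ) : f x ≤ B x + δ * (1 + (x - a)) := by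
    refine image_le_of_deriv_right_lt_deriv_boundary' (B := fun y => B y + δ * (1 + (y - a)))
      (B' := fun y => B' y + δ) hf hf' (by simpa using ha.trans (by linarith)) (by fun_prop)
      (fun y hy => ?_) (fun y hy hfy => ?_) hx
    · have hslope := (((hasDerivWithinAt_id y (Set.Ici y)).sub_const a).const_add 1).const_mul δ
      rw [mul_one] at hslope
      exact (hB' y hy).fun_add hslope
    · have hpos : 0 < δ * (1 + (y - a)) := mul_pos hδ (by linarith [hy.1])
      linarith [bound y hy (by linarith)]
  refine le_of_forall_pos_le_add fun ε hε => ?_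
  have hxa : 0 < 1 + (x - a) := by linarith [hx.1]
  simpa only [div_mul_cancel₀ ε hxa.ne'] using barrier (ε / (1 + (x - a))) (div_pos hε hxa)

/-- The drift of coordinate `j` in the mean-field ODE system at the state `v`, for an arbitrary rate
function `f` in place of `fLk L k` and an arbitrary service rate `κ` in place of `k`. It is meant
for `1 ≤ j` only: at `j = 0` the subtraction `j - 1` truncates. -/
def mfDrift (f : ℝ → ℝ) (lam κ : ℝ) (v : ℕ → ℝ) (j : ℕ) : ℝ :=
  lam * (f (v (j - 1)) - f (v j)) - κ * (v j - v (j + 1))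

lemma sub_le_mul_of_monotoneOn_of_lipschitzOnWith {f : ℝ → ℝ} {s : Set ℝ} {K : NNReal}
    (hf : MonotoneOn f s) (hK : LipschitzOnWith K f s) {x y b : ℝ} (hx : x ∈ s) (hy : y ∈ s)
    (hb : 0 ≤ b) (hxy : x - y ≤ b) : f x - f y ≤ K * b := by
  rcases le_total x y with h | h
  · exact (sub_nonpos.2 (hf hx hy h)).trans (by positivity)
  · calc f x - f y ≤ dist (f x) (f y) := le_abs_self _
      _ ≤ K * dist x y := hK.dist_le_mul x hx y hy
      _ = K * (x - y) := by rw [Real.dist_eq, abs_of_nonneg (sub_nonneg.2 h)]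
      _ ≤ K * b := by gcongr

lemma mfDrift_sub_mfDrift_le {f : ℝ → ℝ} {s : Set ℝ} {K : NNReal} {lam κ : ℝ}
    (hf : MonotoneOn f s) (hK : LipschitzOnWith K f s) (hlam : 0 ≤ lam) (hκ : 0 ≤ κ)
    {v w : ℕ → ℝ} (hv : ∀ i, v i ∈ s) (hw : ∀ i, w i ∈ s) {b : ℝ} (hb : 0 ≤ b)
    (hwv : ∀ i, w i - v i ≤ b) {j : ℕ} (hj : v j ≤ w j) :
    mfDrift f lam κ w j - mfDrift f lam κ v j ≤ (lam * K + κ) * b := by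
  have h_prev := mul_le_mul_of_nonneg_left (sub_le_mul_of_monotoneOn_of_lipschitzOnWith hf hK
    (hw (j - 1)) (hv (j - 1)) hb (hwv (j - 1))) hlam
  have h_self := mul_le_mul_of_nonneg_left (hf (hv j) (hw j) hj) hlam
  have h_self' := mul_le_mul_of_nonneg_left hj hκ
  have h_next := mul_le_mul_of_nonneg_left (hwv (j + 1)) hκ
  unfold mfDrift
  linarith

lemma InUbar.antitone_s17 {v : ℕ → ℝ} (hv : InUbar v) : Antitone v :=
  antitone_nat_of_succ_le hv.2.1

lemma InUbar.mem_Icc_s17 {v : ℕ → ℝ} (hv : InUbar v) (j : ℕ) : v j ∈ Set.Icc 0 1 :=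
  ⟨hv.2.2 j, hv.1 ▸ hv.antitone_s17 j.zero_le⟩

section FixedPoint

variable {L k : ℕ} {lam : ℝ} {ubar : ℕ → ℝ}

lemma inUbar_of_fixedPoint (hkL : k ≤ L) (hlam0 : 0 ≤ lam) (hlam1 : lam ≤ 1) (h0 : ubar 0 = 1)
    (hrec : ∀ m, ubar (m + 1) = lam / k * fLk L k (ubar m)) : InUbar ubar := by
  have hstep (m : ℕ) : ubar m ∈ Set.Icc 0 1 ∧ ubar (m + 1) ≤ ubar m := by
    induction m with
    | zero =>
      refine ⟨by simp [h0], ?_⟩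
      rw [hrec, h0, fLk_one_right hkL, div_mul_comm]
      exact (mul_le_of_le_one_left hlam0 (div_self_le_one _)).trans hlam1
    | succ m ih =>
      have hmem : ubar (m + 1) ∈ Set.Icc 0 1 := by
        refine ⟨?_, ih.2.trans ih.1.2⟩
        rw [hrec]
        exact mul_nonneg (by positivity) (fLk_nonneg hkL ih.1)
      refine ⟨hmem, ?_⟩
      rw [hrec (m + 1), hrec m]
      exact mul_le_mul_of_nonneg_left (fLk_monotoneOn hkL (hrec m ▸ hmem) ih.1 (hrec m ▸ ih.2))
        (by positivity)
  exact ⟨h0, fun m => (hstep m).2, fun m => (hstep m).1.1⟩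

lemma isMFSol_const_of_fixedPoint (hk : k ≠ 0) (hubar : InUbar ubar)
    (hrec : ∀ m, ubar (m + 1) = lam / k * fLk L k (ubar m)) :
    IsMFSol L k lam ubar fun _ => ubar := by
  refine ⟨fun _ => rfl, fun _ _ => hubar, fun j hj t _ => ?_⟩
  obtain ⟨m, rfl⟩ := Nat.exists_eq_add_of_le' hj
  have hk' : (k : ℝ) ≠ 0 := mod_cast hk
  refine (hasDerivWithinAt_const t _ (ubar (m + 1))).congr_deriv ?_
  simp only [Nat.add_sub_cancel, hrec (m + 1)]
  rw [hrec m]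
  field_simp
  ring

end FixedPoint

namespace IsMFSol

variable {L k N : ℕ} {lam s t c : ℝ} {g h : ℕ → ℝ} {u w : ℝ → ℕ → ℝ}

lemma inUbar (hu : IsMFSol L k lam g u) (ht : 0 ≤ t) : InUbar (u t) :=
  hu.2.1 t ht

lemma hasDerivWithinAt (hu : IsMFSol L k lam g u) {j : ℕ} (hj : 1 ≤ j) (ht : 0 ≤ t) :
    HasDerivWithinAt (fun τ => u τ j) (mfDrift (fLk L k) lam k (u t) j) (Set.Ici 0) t :=
  hu.2.2 j hj t ht

-- Picard iteration: while `w τ j` exceeds `u τ j`, their difference grows at rate at most `C` times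
-- the bound already known for all coordinates.
lemma sub_le_pow_div_factorial (hkL : k ≤ L) (hlam : 0 ≤ lam) {K : NNReal}
    (hK : LipschitzOnWith K (fLk L k) (Set.Icc 0 1))
    (hw : IsMFSol L k lam h w) (hu : IsMFSol L k lam g u) (hhg : ∀ j, h j ≤ g j)
    (n j : ℕ) (ht : 0 ≤ t) :
    w t j - u t j ≤ ((lam * K + k) * t) ^ n / n.factorial := by
  set C := lam * K + k
  have hC : 0 ≤ C := by positivity
  have hbound (m : ℕ) (x : ℝ) (hx : 0 ≤ x) : 0 ≤ (C * x) ^ m / m.factorial :=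
    div_nonneg (pow_nonneg (mul_nonneg hC hx) m) (Nat.cast_nonneg _)
  induction n generalizing j t with
  | zero =>
    rw [pow_zero, Nat.factorial_zero, Nat.cast_one, div_one]
    linarith [((hw.inUbar ht).mem_Icc_s17 j).2, ((hu.inUbar ht).mem_Icc_s17 j).1]
  | succ n ih =>
    rcases Nat.eq_zero_or_pos j with rfl | hj
    · rw [(hw.inUbar ht).1, (hu.inUbar ht).1, sub_self]
      exact hbound _ t ht
    have hderiv (x : ℝ) (hx : 0 ≤ x) :=
      (hw.hasDerivWithinAt hj hx).sub (hu.hasDerivWithinAt hj hx)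
    have hbarrier (x : ℝ) : HasDerivAt (fun τ => (C * τ) ^ (n + 1) / (n + 1).factorial)
        (C * ((C * x) ^ n / n.factorial)) x := by
      refine (((hasDerivAt_const_mul C).pow (n + 1)).div_const _).congr_deriv ?_
      rw [Nat.factorial_succ, Nat.add_sub_cancel]
      push_cast
      field_simp
    refine image_le_of_deriv_right_le_of_lt (a := 0)
      (fun x hx => (hderiv x hx.1).continuousWithinAt.mono Set.Icc_subset_Ici_self)
      (fun x hx => (hderiv x hx.1).mono (Set.Ici_subset_Ici.2 hx.1)) ?_
      (fun x _ => (hbarrier x).continuousAt.continuousWithinAt)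
      (fun x _ => (hbarrier x).hasDerivWithinAt) (fun x hx hlt => ?_) ⟨ht, le_rfl⟩
    · simpa [hw.1, hu.1] using hhg j
    · have hx : 0 ≤ x := hx.1
      exact mfDrift_sub_mfDrift_le (fLk_monotoneOn hkL) hK hlam k.cast_nonneg
        (hu.inUbar hx).mem_Icc_s17 (hw.inUbar hx).mem_Icc_s17 (hbound n x hx) (fun i => ih i hx)
        (sub_nonneg.1 ((hbound (n + 1) x hx).trans hlt.le))

theorem apply_le_apply (hkL : k ≤ L) (hlam : 0 ≤ lam) (hw : IsMFSol L k lam h w)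
    (hu : IsMFSol L k lam g u) (hhg : ∀ j, h j ≤ g j) (ht : 0 ≤ t) (j : ℕ) : w t j ≤ u t j := by
  obtain ⟨K, hK⟩ := fLk_lipschitzOnWith L k
  exact sub_nonpos.1 <| ge_of_tendsto'
    (FloorSemiring.tendsto_pow_div_factorial_atTop ((lam * K + k) * t))
    fun n => sub_le_pow_div_factorial hkL hlam hK hw hu hhg n j ht

lemma hasDerivWithinAt_sum (hkL : k ≤ L) (hu : IsMFSol L k lam g u) (N : ℕ) (ht : 0 ≤ t) :
    HasDerivWithinAt (fun τ => ∑ i ∈ Finset.range N, u τ (i + 1))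
      (lam * (k - fLk L k (u t N)) - k * (u t 1 - u t (N + 1))) (Set.Ici 0) t := by
  refine (HasDerivWithinAt.fun_sum fun i _ =>
    hu.hasDerivWithinAt (Nat.le_add_left 1 i) ht).congr_deriv ?_
  simp only [mfDrift, Nat.add_sub_cancel]
  rw [Finset.sum_sub_distrib, ← Finset.mul_sum, ← Finset.mul_sum,
    Finset.sum_range_sub' (fun i => fLk L k (u t i)), Finset.sum_range_sub' (fun i => u t (i + 1)),
    (hu.inUbar ht).1, fLk_one_right hkL]

lemma sum_le_sum_add (hkL : k ≤ L) (hlam : 0 ≤ lam) (hu : IsMFSol L k lam g u)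
    (hlow : ∀ t ∈ Set.Ici (0 : ℝ), lam ≤ u t 1) (hs : 0 ≤ s) (hst : s ≤ t)
    (hc : ∀ x ∈ Set.Icc s t, u x (N + 1) ≤ c) :
    ∑ i ∈ Finset.range N, u t (i + 1) ≤
      ∑ i ∈ Finset.range N, u s (i + 1) + k * c * (t - s) := by
  have hderiv (x : ℝ) (hx : s ≤ x) := hu.hasDerivWithinAt_sum hkL N (hs.trans hx)
  refine image_le_of_deriv_right_le_deriv_boundary (a := s)
    (B := fun x => ∑ i ∈ Finset.range N, u s (i + 1) + k * c * (x - s)) (B' := fun _ => k * c)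
    (fun x hx => (hderiv x hx.1).continuousWithinAt.mono fun y hy => hs.trans hy.1)
    (fun x hx => (hderiv x hx.1).mono (Set.Ici_subset_Ici.2 (hs.trans hx.1))) (by simp)
    (by fun_prop) (fun x _ => ?_) (fun x hx => ?_) ⟨hst, le_rfl⟩
  · simpa using (((hasDerivWithinAt_id x _).sub_const s).const_mul (k * c)).const_add
      (∑ i ∈ Finset.range N, u s (i + 1))
  · have hx0 : 0 ≤ x := hs.trans hx.1
    have h_in := mul_nonneg hlam (fLk_nonneg hkL ((hu.inUbar hx0).mem_Icc_s17 N))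
    have h_low := mul_le_mul_of_nonneg_left (hlow x hx0) k.cast_nonneg
    have h_out := mul_le_mul_of_nonneg_left (hc x ⟨hx.1, hx.2.le⟩) k.cast_nonneg
    linarith

lemma sum_le_tsum_add (hkL : k ≤ L) (hlam : 0 ≤ lam) (hu : IsMFSol L k lam g u)
    (hlow : ∀ t ∈ Set.Ici (0 : ℝ), lam ≤ u t 1) (hg : Summable fun i => g (i + 1))
    (N : ℕ) (ht : 0 ≤ t) :
    ∑ i ∈ Finset.range N, u t (i + 1) ≤ ∑' i, g (i + 1) + k * t := by
  obtain rfl : u 0 = g := funext hu.1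
  calc ∑ i ∈ Finset.range N, u t (i + 1)
    _ ≤ ∑ i ∈ Finset.range N, u 0 (i + 1) + k * 1 * (t - 0) :=
      hu.sum_le_sum_add hkL hlam hlow le_rfl ht fun x hx => ((hu.inUbar hx.1).mem_Icc_s17 _).2
    _ ≤ ∑' i, u 0 (i + 1) + k * t := by
      rw [mul_one, sub_zero]
      gcongr
      exact hg.sum_le_tsum _ fun i _ => (hu.inUbar le_rfl).2.2 _

lemma summable (hkL : k ≤ L) (hlam : 0 ≤ lam) (hu : IsMFSol L k lam g u)
    (hlow : ∀ t ∈ Set.Ici (0 : ℝ), lam ≤ u t 1) (hg : Summable fun i => g (i + 1)) (ht : 0 ≤ t) :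
    Summable fun i => u t (i + 1) :=
  summable_of_sum_range_le (fun i => (hu.inUbar ht).2.2 (i + 1))
    fun N => hu.sum_le_tsum_add hkL hlam hlow hg N ht

lemma apply_succ_le_div (hkL : k ≤ L) (hlam : 0 ≤ lam) (hu : IsMFSol L k lam g u)
    (hlow : ∀ t ∈ Set.Ici (0 : ℝ), lam ≤ u t 1) (hg : Summable fun i => g (i + 1))
    (N : ℕ) (ht : 0 ≤ t) : u t (N + 1) ≤ (∑' i, g (i + 1) + k * t) / (N + 1) := by
  have hcard : (N + 1) * u t (N + 1) ≤ ∑ i ∈ Finset.range (N + 1), u t (i + 1) := by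
    simpa using Finset.card_nsmul_le_sum (Finset.range (N + 1)) (fun i => u t (i + 1)) _
      fun i hi => (hu.inUbar ht).antitone_s17 (Nat.succ_le_of_lt (Finset.mem_range.1 hi))
  rw [le_div_iff₀' (by positivity)]
  exact hcard.trans (hu.sum_le_tsum_add hkL hlam hlow hg (N + 1) ht)

theorem antitoneOn_tsum (hkL : k ≤ L) (hlam : 0 ≤ lam) (hu : IsMFSol L k lam g u)
    (hlow : ∀ t ∈ Set.Ici (0 : ℝ), lam ≤ u t 1) (hg : Summable fun i => g (i + 1)) :
    AntitoneOn (fun t => ∑' i, u t (i + 1)) (Set.Ici 0) := by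
  intro s hs t ht hst
  set M := ∑' i, g (i + 1) + k * t with hM
  have htail (N : ℕ) : ∀ x ∈ Set.Icc s t, u x (N + 1) ≤ M * (1 / ((N : ℝ) + 1)) := by
    intro x hx
    rw [mul_one_div]
    refine (hu.apply_succ_le_div hkL hlam hlow hg N (hs.trans hx.1)).trans ?_
    have hxt : x ≤ t := hx.2
    gcongr
    rw [hM]
    gcongr
  have herror : Filter.Tendsto (fun N : ℕ => k * (M * (1 / ((N : ℝ) + 1))) * (t - s))
      Filter.atTop (nhds 0) := by
    simpa using ((tendsto_one_div_add_atTop_nhds_zero_nat.const_mul M).const_mul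
      (k : ℝ)).mul_const (t - s)
  have hlim (x : ℝ) (hx : 0 ≤ x) :=
    (hu.summable hkL hlam hlow hg hx).hasSum.tendsto_sum_nat
  refine le_of_tendsto_of_tendsto' (hlim t ht) ?_
    fun N => hu.sum_le_sum_add hkL hlam hlow hs hst (htail N)
  simpa using (hlim s hs).add herror

end IsMFSol

/-- for `0 < λ < 1` and a `Ū`-valued solution `u` with initial condition
`g ∈ U` dominating the fixed point `ū` coordinatewise, one has `u_1(t) ≥ λ` for all
`t ≥ 0` and `t ↦ v_1(u(t))` is nonincreasing on `[0,∞)`; in particular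
`v_1(u(t)) ≤ v_1(g)` for all `t ≥ 0`. -/
theorem mfSol_v1_nonincreasing (L k : ℕ) (hk : 1 ≤ k) (hkL : k ≤ L)
    (lam : ℝ) (hlam0 : 0 < lam) (hlam1 : lam < 1)
    (ubar : ℕ → ℝ) (h0 : ubar 0 = 1)
    (hrec : ∀ m : ℕ, ubar (m + 1) = lam / k * fLk L k (ubar m))
    (g : ℕ → ℝ) (hg : InUbar g) (hgU : Summable (fun i : ℕ => g (i + 1)))
    (hdom : ∀ j, ubar j ≤ g j)
    (u : ℝ → ℕ → ℝ) (hu : IsMFSol L k lam g u) :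
    (∀ t ∈ Set.Ici (0 : ℝ), lam ≤ u t 1) ∧
    (∀ t ∈ Set.Ici (0 : ℝ), Summable (fun i : ℕ => u t (i + 1))) ∧
    AntitoneOn (fun t : ℝ => ∑' i : ℕ, u t (i + 1)) (Set.Ici (0 : ℝ)) ∧
    (∀ t ∈ Set.Ici (0 : ℝ), (∑' i : ℕ, u t (i + 1)) ≤ ∑' i : ℕ, g (i + 1)) := by
  have hk0 : k ≠ 0 := Nat.one_le_iff_ne_zero.1 hk
  have hubar : InUbar ubar := inUbar_of_fixedPoint hkL hlam0.le hlam1.le h0 hrec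
  have hfix : IsMFSol L k lam ubar fun _ => ubar := isMFSol_const_of_fixedPoint hk0 hubar hrec
  have hubar_one : ubar 1 = lam := by
    rw [hrec 0, h0, fLk_one_right hkL, div_mul_cancel₀ lam (mod_cast hk0)]
  have hlow : ∀ t ∈ Set.Ici (0 : ℝ), lam ≤ u t 1 := fun t ht =>
    hubar_one ▸ hfix.apply_le_apply hkL hlam0.le hu hdom ht 1
  have hanti := hu.antitoneOn_tsum hkL hlam0.le hlow hgU
  refine ⟨hlow, fun t ht => hu.summable hkL hlam0.le hlow hgU ht, hanti, fun t ht => ?_⟩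
  simpa only [hu.1] using hanti Set.self_mem_Ici ht ht
end
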